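/- (Uniqueness of maximal Blaschke products) Let B_1 and B_2 be maximal Blaschke products such that B_1' and B_2' have exactly the same zeros in 𝔻, with the same multiplicities. Then B_2 = T ∘ B_1 for some conformal automorphism T of 𝔻. -/

import Mathlib

open Metric Filter

/-- The order of vanishing of `f` at `z`. -/
noncomputable def vOrder (f : ℂ → ℂ) (z : ℂ) : ℕ∞ :=
  sInf ((fun n : ℕ => (n : ℕ∞)) '' {n : ℕ | iteratedDeriv n f z ≠ 0})

/-- A (finite or infinite) Blaschke product: a holomorphic function on the open unit
disk of the form `B(z) = η z^m ∏_j (|z_j|/z_j)(z_j − z)/(1 − conj z_j · z)`, where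
`|η| = 1`, `m ≥ 0`, the points `z_j ∈ 𝔻 \ {0}` satisfy the Blaschke condition
`Σ_j (1 − |z_j|) < ∞`, and the (possibly infinite) product converges. -/
def IsBlaschkeProduct (B : ℂ → ℂ) : Prop :=
  (∀ z ∈ Metric.ball (0 : ℂ) 1, DifferentiableAt ℂ B z) ∧
  ∃ (η : ℂ) (m : ℕ) (ι : Type) (a : ι → ℂ),
    ‖η‖ = 1 ∧ (∀ j, a j ≠ 0 ∧ ‖a j‖ < 1) ∧
    Summable (fun j => 1 - ‖a j‖) ∧
    ∀ z ∈ Metric.ball (0 : ℂ) 1,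
      B z = η * z ^ m *
        ∏' j, (((‖a j‖ : ℝ) : ℂ) / a j) * ((a j - z) / (1 - (starRingEnd ℂ) (a j) * z))

/-- A Blaschke product `B` is *maximal* if for every nonconstant holomorphic map `f`
of the open unit disk into the closed unit disk whose critical set contains that of
`B` (with multiplicities), one has
`|f'(z)| (1 − |B(z)|²) ≤ |B'(z)| (1 − |f(z)|²)` on the disk. -/
def IsMaximalBlaschke (B : ℂ → ℂ) : Prop :=
  IsBlaschkeProduct B ∧
  ∀ f : ℂ → ℂ,
    (∀ z ∈ Metric.ball (0 : ℂ) 1, DifferentiableAt ℂ f z) →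
    (∀ z ∈ Metric.ball (0 : ℂ) 1, ‖f z‖ ≤ 1) →
    (∃ z ∈ Metric.ball (0 : ℂ) 1, ∃ w ∈ Metric.ball (0 : ℂ) 1, f z ≠ f w) →
    (∀ z ∈ Metric.ball (0 : ℂ) 1, vOrder (deriv B) z ≤ vOrder (deriv f) z) →
    ∀ z ∈ Metric.ball (0 : ℂ) 1,
      ‖deriv f z‖ * (1 - ‖B z‖ ^ 2) ≤ ‖deriv B z‖ * (1 - ‖f z‖ ^ 2)

/-!
If `B₁'` and `B₂'` have the same zeros, maximality makes the hyperbolic derivatives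
`|B'| / (1 - |B|²)` of `B₁` and `B₂` equal, so the theorem is a rigidity statement for holomorphic
maps `f`, `g` into the disk: if the hyperbolic derivative of `g` is at most that of `f` near a point
`p` with `f'(p) ≠ 0`, with equality at `p`, then `g` is `f` followed by a disk automorphism.
Composing with disk involutions and a rotation, one may assume `f(p) = g(p) = 0` and
`f'(p) = g'(p)`. With `t = |f|²`, the inequality then reads `(1 - t) |g'/f'| + t |g/f|² ≤ 1`.
On the level curve `t = s` around `p` the coefficients are constant, so the maximum principle
applies to the holomorphic function `(1 - s) g'/f' + s (g/f)²`, whose value at `p` is `1`, and shows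
that it is identically `1`. Two values of `s` give `(g/f)² = 1`.
Constant Blaschke products are the unimodular constants, for which the claim is immediate.
-/

open scoped ComplexConjugate Topology

section DiskInvolution

variable {a b c w : ℂ}

theorem one_sub_conj_mul_ne_zero (ha : ‖a‖ < 1) (hw : ‖w‖ ≤ 1) : 1 - conj a * w ≠ 0 := by
  intro h
  have hnorm : ‖conj a * w‖ < 1 := by
    rw [norm_mul, RCLike.norm_conj]
    exact mul_lt_one_of_nonneg_of_lt_one_left (norm_nonneg a) ha hw
  rw [← sub_eq_zero.1 h, norm_one] at hnorm
  exact hnorm.false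

theorem norm_one_sub_conj_mul_sq_sub (a w : ℂ) :
    ‖1 - conj a * w‖ ^ 2 - ‖a - w‖ ^ 2 = (1 - ‖a‖ ^ 2) * (1 - ‖w‖ ^ 2) := by
  simp only [← Complex.normSq_eq_norm_sq, Complex.normSq_apply, Complex.sub_re, Complex.sub_im,
    Complex.mul_re, Complex.mul_im, Complex.conj_re, Complex.conj_im, Complex.one_re,
    Complex.one_im]
  ring

/-- For `‖a‖ < 1`, the conformal involution of the unit disk that exchanges `0` and `a`;
it moves the values of the compared maps at a base point to `0`. -/
noncomputable def diskInvolution (a w : ℂ) : ℂ :=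
  (a - w) / (1 - conj a * w)

@[simp]
theorem diskInvolution_self (a : ℂ) : diskInvolution a a = 0 := by
  simp [diskInvolution]

theorem one_sub_norm_diskInvolution_sq (ha : ‖a‖ < 1) (hw : ‖w‖ ≤ 1) :
    1 - ‖diskInvolution a w‖ ^ 2 = (1 - ‖a‖ ^ 2) * (1 - ‖w‖ ^ 2) / ‖1 - conj a * w‖ ^ 2 := by
  have hden : ‖1 - conj a * w‖ ≠ 0 := norm_ne_zero_iff.2 (one_sub_conj_mul_ne_zero ha hw)
  rw [← norm_one_sub_conj_mul_sq_sub, diskInvolution, norm_div, div_pow, sub_div,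
    div_self (pow_ne_zero 2 hden)]

theorem norm_diskInvolution_le_one (ha : ‖a‖ < 1) (hw : ‖w‖ ≤ 1) : ‖diskInvolution a w‖ ≤ 1 := by
  rw [← sq_le_one_iff₀ (norm_nonneg _), ← sub_nonneg, one_sub_norm_diskInvolution_sq ha hw]
  have ha' : 0 ≤ 1 - ‖a‖ ^ 2 := sub_nonneg.2 (pow_le_one₀ (norm_nonneg a) ha.le)
  have hw' : 0 ≤ 1 - ‖w‖ ^ 2 := sub_nonneg.2 (pow_le_one₀ (norm_nonneg w) hw)
  positivity

theorem norm_diskInvolution_lt_one (ha : ‖a‖ < 1) (hw : ‖w‖ < 1) : ‖diskInvolution a w‖ < 1 := by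
  rw [← sq_lt_one_iff₀ (norm_nonneg _), ← sub_pos, one_sub_norm_diskInvolution_sq ha hw.le]
  have ha' : 0 < 1 - ‖a‖ ^ 2 := sub_pos.2 (pow_lt_one₀ (norm_nonneg a) ha two_ne_zero)
  have hw' : 0 < 1 - ‖w‖ ^ 2 := sub_pos.2 (pow_lt_one₀ (norm_nonneg w) hw two_ne_zero)
  have hden := norm_pos_iff.2 (one_sub_conj_mul_ne_zero ha hw.le)
  positivity

theorem hasDerivAt_diskInvolution (ha : ‖a‖ < 1) (hw : ‖w‖ ≤ 1) :
    HasDerivAt (diskInvolution a) (-(1 - ‖a‖ ^ 2) / (1 - conj a * w) ^ 2) w := by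
  have h := ((hasDerivAt_id w).const_sub a).fun_div
    (((hasDerivAt_id w).const_mul (conj a)).const_sub 1) (one_sub_conj_mul_ne_zero ha hw)
  refine h.congr_deriv (congrArg (· / _) ?_)
  simp only [id_eq]
  linear_combination Complex.mul_conj' a

theorem differentiableOn_diskInvolution_comp {f : ℂ → ℂ} {U : Set ℂ} (hf : DifferentiableOn ℂ f U)
    (ha : ‖a‖ < 1) (hfU : ∀ z ∈ U, ‖f z‖ ≤ 1) : DifferentiableOn ℂ (diskInvolution a ∘ f) U :=
  fun z hz =>
    (hasDerivAt_diskInvolution ha (hfU z hz)).differentiableAt.comp_differentiableWithinAt z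
      (hf z hz)

theorem diskInvolution_diskInvolution (ha : ‖a‖ < 1) (hb : ‖b‖ < 1) (hw : ‖w‖ ≤ 1) :
    diskInvolution b (diskInvolution a w) =
      -((1 - b * conj a) / (1 - conj b * a)) * diskInvolution (diskInvolution a b) w := by
  have hD : 1 - conj a * w ≠ 0 := one_sub_conj_mul_ne_zero ha hw
  have hE : 1 - b * conj a ≠ 0 := mul_comm b (conj a) ▸ one_sub_conj_mul_ne_zero ha hb.le
  have hE' : 1 - conj b * a ≠ 0 := one_sub_conj_mul_ne_zero hb ha.le
  have hlhs : diskInvolution b (diskInvolution a w) =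
      (b * (1 - conj a * w) - (a - w)) / ((1 - conj a * w) - conj b * (a - w)) := by
    rw [diskInvolution, diskInvolution, ← mul_div_mul_right _ _ hD, sub_mul, sub_mul, mul_assoc,
      div_mul_cancel₀ _ hD, one_mul]
  have hrhs : diskInvolution (diskInvolution a b) w =
      ((a - b) / (1 - b * conj a) - w) / (1 - (conj a - conj b) / (1 - conj b * a) * w) := by
    simp only [diskInvolution, map_div₀, map_sub, map_mul, map_one, Complex.conj_conj, mul_comm]
  have hnum : (a - b) / (1 - b * conj a) - w =
      -(b * (1 - conj a * w) - (a - w)) / (1 - b * conj a) := by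
    field_simp
    ring
  have hden : 1 - (conj a - conj b) / (1 - conj b * a) * w =
      ((1 - conj a * w) - conj b * (a - w)) / (1 - conj b * a) := by
    field_simp
    ring
  rw [hlhs, hrhs, hnum, hden]
  generalize 1 - conj b * a = E' at hE' ⊢
  field_simp

theorem diskInvolution_involutive (ha : ‖a‖ < 1) (hw : ‖w‖ ≤ 1) :
    diskInvolution a (diskInvolution a w) = w := by
  have hden : 1 - a * conj a ≠ 0 := by
    simpa only [mul_comm] using one_sub_conj_mul_ne_zero ha ha.le
  rw [diskInvolution_diskInvolution ha ha hw, diskInvolution_self, mul_comm (conj a),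
    div_self hden]
  simp [diskInvolution]

theorem diskInvolution_mul (hc : ‖c‖ = 1) (b w : ℂ) :
    diskInvolution b (c * w) = c * diskInvolution (conj c * b) w := by
  have hcc : c * conj c = 1 := by rw [Complex.mul_conj', hc]; norm_num
  rw [diskInvolution, diskInvolution, mul_div_assoc', map_mul, Complex.conj_conj]
  congr 1
  · linear_combination -b * hcc
  · ring

theorem exists_automorphism_of_diskInvolution_eq_mul (ha : ‖a‖ < 1) (hb : ‖b‖ < 1)
    (hc : ‖c‖ = 1) :
    ∃ τ z₀ : ℂ, ‖τ‖ = 1 ∧ ‖z₀‖ < 1 ∧ ∀ w v : ℂ, ‖w‖ ≤ 1 → ‖v‖ ≤ 1 →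
      diskInvolution b v = c * diskInvolution a w → v = τ * diskInvolution z₀ w := by
  have hcb : ‖conj c * b‖ < 1 := by rwa [norm_mul, RCLike.norm_conj, hc, one_mul]
  set d := conj c * b
  refine ⟨c * -((1 - d * conj a) / (1 - conj d * a)), diskInvolution a d, ?_,
    norm_diskInvolution_lt_one ha hcb, fun w v hw hv h => ?_⟩
  · have hconj : 1 - d * conj a = conj (1 - conj d * a) := by simp
    have hden : 1 - conj d * a ≠ 0 := one_sub_conj_mul_ne_zero hcb ha.le
    rw [norm_mul, hc, one_mul, norm_neg, norm_div, hconj, RCLike.norm_conj,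
      div_self (norm_ne_zero_iff.2 hden)]
  · rw [mul_assoc, ← diskInvolution_diskInvolution ha hcb hw, ← diskInvolution_mul hc, ← h,
      diskInvolution_involutive hb hv]

end DiskInvolution

section HyperbolicDerivative

/-- The norm of the derivative of `f` from the Euclidean metric to the hyperbolic metric of the unit
disk, up to the normalization of that metric; it has the junk value `0` where `‖f z‖ = 1`. -/
noncomputable def hyperbolicDeriv (f : ℂ → ℂ) (z : ℂ) : ℝ :=
  ‖deriv f z‖ / (1 - ‖f z‖ ^ 2)

theorem hyperbolicDeriv_diskInvolution_comp {f : ℂ → ℂ} {a z : ℂ} (ha : ‖a‖ < 1)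
    (hf : DifferentiableAt ℂ f z) (hfz : ‖f z‖ ≤ 1) :
    hyperbolicDeriv (diskInvolution a ∘ f) z = hyperbolicDeriv f z := by
  have ha' : 0 < 1 - ‖a‖ ^ 2 := sub_pos.2 (pow_lt_one₀ (norm_nonneg a) ha two_ne_zero)
  have hden : 0 < ‖1 - conj a * f z‖ := norm_pos_iff.2 (one_sub_conj_mul_ne_zero ha hfz)
  have hderiv : ‖deriv (diskInvolution a ∘ f) z‖ =
      (1 - ‖a‖ ^ 2) / ‖1 - conj a * f z‖ ^ 2 * ‖deriv f z‖ := by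
    rw [((hasDerivAt_diskInvolution ha hfz).comp z hf.hasDerivAt).deriv, norm_mul, norm_div,
      norm_neg, norm_pow]
    congr 2
    exact_mod_cast Complex.norm_of_nonneg ha'.le
  rw [hyperbolicDeriv, hderiv, Function.comp_apply, one_sub_norm_diskInvolution_sq ha hfz,
    mul_div_right_comm _ (1 - ‖f z‖ ^ 2), mul_div_mul_left _ _ (by positivity), hyperbolicDeriv]

theorem hyperbolicDeriv_eq_zero_iff {f : ℂ → ℂ} {z : ℂ} (hfz : ‖f z‖ < 1) :
    hyperbolicDeriv f z = 0 ↔ deriv f z = 0 := by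
  have hpos : 0 < 1 - ‖f z‖ ^ 2 := sub_pos.2 (pow_lt_one₀ (norm_nonneg _) hfz two_ne_zero)
  rw [hyperbolicDeriv, div_eq_zero_iff, or_iff_left hpos.ne', norm_eq_zero]

end HyperbolicDerivative

section MaximumPrinciple

variable {p : ℂ} {t : ℂ → ℝ}

theorem eventually_eq_of_norm_le_on_level {G : ℂ → ℂ} {ε s : ℝ} (hε : 0 < ε)
    (ht : ContinuousOn t (closedBall p ε)) (hG : DifferentiableOn ℂ G (closedBall p ε))
    (hps : t p < s) (hsphere : ∀ z ∈ sphere p ε, s < t z)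
    (hlevel : ∀ z ∈ ball p ε, t z = s → ‖G z‖ ≤ ‖G p‖) :
    ∀ᶠ z in 𝓝 p, G z = G p := by
  set V := ball p ε ∩ t ⁻¹' Set.Iio s
  have hV : IsOpen V :=
    (ht.mono ball_subset_closedBall).isOpen_inter_preimage isOpen_ball isOpen_Iio
  have hclosure : closure V ⊆ closedBall p ε ∩ t ⁻¹' Set.Iic s :=
    closure_minimal
      (Set.inter_subset_inter ball_subset_closedBall (Set.preimage_mono Set.Iio_subset_Iic_self))
      (ht.preimage_isClosed_of_isClosed isClosed_closedBall isClosed_Iic)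
  have hfrontier : ∀ z ∈ frontier V, ‖G z‖ ≤ ‖G p‖ := fun z hz => by
    obtain ⟨hzball, hzs : t z ≤ s⟩ := hclosure hz.1
    have hz' : z ∈ ball p ε :=
      (mem_closedBall.1 hzball).lt_of_ne fun h => (hsphere z h).not_ge hzs
    refine hlevel z hz' (hzs.eq_of_not_lt fun h => hz.2 ?_)
    rw [hV.interior_eq]
    exact ⟨hz', h⟩
  have hGV : DiffContOnCl ℂ G V :=
    (hG.mono (hclosure.trans Set.inter_subset_left)).diffContOnCl
  have hmax : IsLocalMax (norm ∘ G) p := by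
    filter_upwards [hV.mem_nhds ⟨mem_ball_self hε, hps⟩] with z hz
    exact Complex.norm_le_of_forall_mem_frontier_norm_le
      (isBounded_ball.subset Set.inter_subset_left) hGV hfrontier (subset_closure hz)
  refine Complex.eventually_eq_of_isLocalMax_norm ?_ hmax
  filter_upwards [ball_mem_nhds p hε] with z hz
  exact hG.differentiableAt (mem_of_superset (isOpen_ball.mem_nhds hz) ball_subset_closedBall)

theorem eventually_convexCombination_eq_one {A B : ℂ → ℂ}
    (ht : ∀ᶠ z in 𝓝 p, ContinuousAt t z) (htp : t p = 0) (htpos : ∀ᶠ z in 𝓝[≠] p, 0 < t z)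
    (hA : AnalyticAt ℂ A p) (hB : AnalyticAt ℂ B p) (hAp : A p = 1) (hBp : B p = 1)
    (hle : ∀ᶠ z in 𝓝[≠] p, (1 - t z) * ‖A z‖ + t z * ‖B z‖ ≤ 1) :
    ∀ᶠ s : ℝ in 𝓝[>] 0, ∀ᶠ z in 𝓝 p, (1 - s) * A z + s * B z = 1 := by
  obtain ⟨ε, hε, hball⟩ := nhds_basis_closedBall.eventually_iff.1
    ((ht.and (hA.eventually_analyticAt.and hB.eventually_analyticAt)).and
      (eventually_nhdsWithin_iff.1 (htpos.and hle)))
  have htK : ContinuousOn t (closedBall p ε) := fun z hz => (hball hz).1.1.continuousWithinAt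
  have hAK : DifferentiableOn ℂ A (closedBall p ε) := fun z hz =>
    (hball hz).1.2.1.differentiableWithinAt
  have hBK : DifferentiableOn ℂ B (closedBall p ε) := fun z hz =>
    (hball hz).1.2.2.differentiableWithinAt
  obtain ⟨q, hq, hqmin⟩ := (isCompact_sphere p ε).exists_isMinOn
    (NormedSpace.sphere_nonempty.2 hε.le) (htK.mono sphere_subset_closedBall)
  have hqpos : 0 < t q :=
    ((hball (sphere_subset_closedBall hq)).2 (ne_of_mem_sphere hq hε.ne')).1
  filter_upwards [Ioo_mem_nhdsGT (lt_min hqpos one_pos)] with s ⟨hs, hslt⟩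
  obtain ⟨hsq, hs1⟩ := lt_min_iff.1 hslt
  have hGp : (1 - s) * A p + s * B p = 1 := by rw [hAp, hBp]; ring
  have hconst := eventually_eq_of_norm_le_on_level (G := fun z => (1 - s) * A z + s * B z) hε htK
    ((hAK.const_mul _).add (hBK.const_mul _)) (htp ▸ hs) (fun z hz => hsq.trans_le (hqmin hz))
  simp only [hGp] at hconst
  refine hconst fun z hz hzs => ?_
  have hzp : z ≠ p := by rintro rfl; exact hs.ne' (hzs ▸ htp)
  calc ‖(1 - s) * A z + s * B z‖ ≤ ‖((1 - s : ℝ) : ℂ) * A z‖ + ‖(s : ℂ) * B z‖ := by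
        simpa only [Complex.ofReal_sub, Complex.ofReal_one] using norm_add_le _ _
    _ = (1 - t z) * ‖A z‖ + t z * ‖B z‖ := by
        rw [norm_mul, norm_mul, Complex.norm_of_nonneg (sub_pos.2 hs1).le,
          Complex.norm_of_nonneg hs.le, hzs]
    _ ≤ 1 := ((hball (ball_subset_closedBall hz)).2 hzp).2
    _ = ‖(1 : ℂ)‖ := norm_one.symm

theorem eventually_eq_one_of_weighted_norm_le_one {A B : ℂ → ℂ}
    (ht : ∀ᶠ z in 𝓝 p, ContinuousAt t z) (htp : t p = 0) (htpos : ∀ᶠ z in 𝓝[≠] p, 0 < t z)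
    (hA : AnalyticAt ℂ A p) (hB : AnalyticAt ℂ B p) (hAp : A p = 1) (hBp : B p = 1)
    (hle : ∀ᶠ z in 𝓝[≠] p, (1 - t z) * ‖A z‖ + t z * ‖B z‖ ≤ 1) :
    ∀ᶠ z in 𝓝 p, B z = 1 := by
  obtain ⟨δ, hδ, hcomb⟩ := mem_nhdsGT_iff_exists_Ioo_subset.1
    (eventually_convexCombination_eq_one ht htp htpos hA hB hAp hBp hle)
  obtain ⟨s, hs : 0 < s, hsδ⟩ := exists_between (Set.mem_Ioi.1 hδ)
  filter_upwards [hcomb ⟨hs, hsδ⟩, hcomb ⟨half_pos hs, (half_lt_self hs).trans hsδ⟩] with z h₁ h₂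
  push_cast at h₂
  refine mul_left_cancel₀ (Complex.ofReal_ne_zero.2 hs.ne') ?_
  linear_combination (2 - s) * h₁ - 2 * (1 - s) * h₂

end MaximumPrinciple

section Rigidity

variable {f g : ℂ → ℂ} {p z : ℂ}

theorem analyticAt_dslope_self (hf : AnalyticAt ℂ f p) : AnalyticAt ℂ (dslope f p) p := by
  obtain ⟨_, hseries⟩ := hf
  exact ⟨_, hseries.has_fpower_series_dslope_fslope⟩

theorem weighted_norm_le_one_of_hyperbolicDeriv_le (hf : ‖f z‖ < 1) (hg : ‖g z‖ < 1)
    (hf0 : f z ≠ 0) (hf' : deriv f z ≠ 0) (hle : hyperbolicDeriv g z ≤ hyperbolicDeriv f z) :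
    (1 - ‖f z‖ ^ 2) * ‖deriv g z / deriv f z‖ + ‖f z‖ ^ 2 * ‖(g z / f z) ^ 2‖ ≤ 1 := by
  have hfpos : 0 < 1 - ‖f z‖ ^ 2 := sub_pos.2 (pow_lt_one₀ (norm_nonneg _) hf two_ne_zero)
  have hgpos : 0 < 1 - ‖g z‖ ^ 2 := sub_pos.2 (pow_lt_one₀ (norm_nonneg _) hg two_ne_zero)
  have hderiv : (1 - ‖f z‖ ^ 2) * ‖deriv g z / deriv f z‖ ≤ 1 - ‖g z‖ ^ 2 := by
    rw [norm_div, mul_div_assoc', div_le_iff₀ (norm_pos_iff.2 hf'), mul_comm,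
      mul_comm (1 - ‖g z‖ ^ 2)]
    exact (div_le_div_iff₀ hgpos hfpos).1 hle
  have hvalue : ‖f z‖ ^ 2 * ‖(g z / f z) ^ 2‖ = ‖g z‖ ^ 2 := by
    rw [norm_pow, ← mul_pow, ← norm_mul, mul_div_cancel₀ _ hf0]
  linarith

theorem eventually_eq_of_hyperbolicDeriv_le (hf : AnalyticAt ℂ f p) (hg : AnalyticAt ℂ g p)
    (hfp : f p = 0) (hgp : g p = 0) (hf' : deriv f p ≠ 0) (heq : deriv g p = deriv f p)
    (hle : ∀ᶠ z in 𝓝 p, hyperbolicDeriv g z ≤ hyperbolicDeriv f z) :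
    ∀ᶠ z in 𝓝 p, g z = f z := by
  have hf_dslope (z : ℂ) : (z - p) * dslope f p z = f z := sub_smul_dslope_of_zero hfp z
  have hg_dslope (z : ℂ) : (z - p) * dslope g p z = g z := sub_smul_dslope_of_zero hgp z
  have hdslope_p : dslope f p p ≠ 0 := by rwa [dslope_same]
  have hdslope : ∀ᶠ z in 𝓝 p, dslope f p z ≠ 0 :=
    (analyticAt_dslope_self hf).continuousAt.eventually_ne hdslope_p
  set R : ℂ → ℂ := fun z => dslope g p z / dslope f p z
  have hR : AnalyticAt ℂ R p :=
    (analyticAt_dslope_self hg).div (analyticAt_dslope_self hf) hdslope_p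
  have hRp : R p = 1 := by simp only [R, dslope_same, heq, div_self hf']
  have hR_eq {z : ℂ} (hz : z ≠ p) : g z / f z = R z := by
    rw [← hf_dslope, ← hg_dslope, mul_div_mul_left _ _ (sub_ne_zero.2 hz)]
  have hf_ne : ∀ᶠ z in 𝓝[≠] p, f z ≠ 0 :=
    hf.differentiableAt.hasDerivAt.eventually_ne hf'
  have hsq : ∀ᶠ z in 𝓝 p, R z ^ 2 = 1 := by
    refine eventually_eq_one_of_weighted_norm_le_one (t := fun z => ‖f z‖ ^ 2)
      (A := fun z => deriv g z / deriv f z) ?_ (by simp [hfp]) ?_ (hg.deriv.div hf.deriv hf')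
      (hR.pow 2) (by rw [heq, div_self hf']) (by simp [hRp]) ?_
    · filter_upwards [hf.eventually_analyticAt] with z hz using hz.continuousAt.norm.pow 2
    · filter_upwards [hf_ne] with z hz using by positivity
    · have hlt {h : ℂ → ℂ} (hh : AnalyticAt ℂ h p) (hhp : h p = 0) : ∀ᶠ z in 𝓝[≠] p, ‖h z‖ < 1 :=
        nhdsWithin_le_nhds (hh.continuousAt.norm.eventually_lt_const (by simp [hhp]))
      filter_upwards [hlt hf hfp, hlt hg hgp, hf_ne, self_mem_nhdsWithin, nhdsWithin_le_nhds hle,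
        nhdsWithin_le_nhds (hf.deriv.continuousAt.eventually_ne hf')] with z hfz hgz hz hzp h hf'z
      rw [← hR_eq hzp]
      exact weighted_norm_le_one_of_hyperbolicDeriv_le hfz hgz hz hf'z h
  have hR_ne : ∀ᶠ z in 𝓝 p, R z ≠ -1 :=
    hR.continuousAt.eventually_ne (by rw [hRp]; norm_num)
  filter_upwards [hsq, hdslope, hR_ne] with z hz hz0 hneg
  have hRz : R z = 1 := (sq_eq_one_iff.1 hz).resolve_right hneg
  rw [← hg_dslope, ← hf_dslope, (div_eq_one_iff_eq hz0).1 hRz]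

theorem exists_eventually_eq_const_mul_of_hyperbolicDeriv_le (hf : AnalyticAt ℂ f p)
    (hg : AnalyticAt ℂ g p) (hfp : f p = 0) (hgp : g p = 0) (hf' : deriv f p ≠ 0)
    (heq : hyperbolicDeriv g p = hyperbolicDeriv f p)
    (hle : ∀ᶠ z in 𝓝 p, hyperbolicDeriv g z ≤ hyperbolicDeriv f z) :
    ∃ c : ℂ, ‖c‖ = 1 ∧ ∀ᶠ z in 𝓝 p, g z = c * f z := by
  set c := deriv g p / deriv f p
  have hnorm : ‖deriv g p‖ = ‖deriv f p‖ := by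
    simpa [hyperbolicDeriv, hfp, hgp] using heq
  have hc : ‖c‖ = 1 := by rw [norm_div, hnorm, div_self (norm_ne_zero_iff.2 hf')]
  have hc0 : c ≠ 0 := norm_ne_zero_iff.1 (hc ▸ one_ne_zero)
  have hderiv (z : ℂ) : deriv (fun z => c * f z) z = c * deriv f z := deriv_const_mul_field c
  have hcf (z : ℂ) : hyperbolicDeriv (fun z => c * f z) z = hyperbolicDeriv f z := by
    simp only [hyperbolicDeriv, hderiv, norm_mul, hc, one_mul]
  refine ⟨c, hc, eventually_eq_of_hyperbolicDeriv_le (analyticAt_const.mul hf) hg ?_ hgp ?_ ?_ ?_⟩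
  · rw [hfp, mul_zero]
  · rw [hderiv]
    exact mul_ne_zero hc0 hf'
  · rw [hderiv, div_mul_cancel₀ _ hf']
  · simpa only [hcf] using hle

end Rigidity

section HolomorphicRigidity

variable {U : Set ℂ} {f g : ℂ → ℂ} {p : ℂ}

theorem eqOn_deriv_zero_of_eqOn_const {c : ℂ} (hU : IsOpen U) (hf : Set.EqOn f (fun _ => c) U) :
    Set.EqOn (deriv f) 0 U :=
  (hf.deriv hU).trans fun z _ => deriv_const z c

theorem norm_lt_one_of_not_eqOn_deriv_zero (hU : IsOpen U) (hUc : IsPreconnected U)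
    (hf : DifferentiableOn ℂ f U) (hf1 : ∀ z ∈ U, ‖f z‖ ≤ 1) (hf' : ¬Set.EqOn (deriv f) 0 U) :
    ∀ z ∈ U, ‖f z‖ < 1 := by
  refine fun z hz => (hf1 z hz).lt_of_ne fun hz1 =>
    hf' (eqOn_deriv_zero_of_eqOn_const (c := f z) hU ?_)
  exact Complex.eqOn_of_isPreconnected_of_isMaxOn_norm hUc hU hf hz fun w hw =>
    (hf1 w hw).trans hz1.ge

theorem exists_eqOn_automorphism_of_hyperbolicDeriv_le (hU : IsOpen U) (hUc : IsPreconnected U)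
    (hf : DifferentiableOn ℂ f U) (hg : DifferentiableOn ℂ g U) (hf1 : ∀ z ∈ U, ‖f z‖ ≤ 1)
    (hg1 : ∀ z ∈ U, ‖g z‖ ≤ 1) (hp : p ∈ U) (hf' : deriv f p ≠ 0)
    (heq : hyperbolicDeriv g p = hyperbolicDeriv f p)
    (hle : ∀ᶠ z in 𝓝 p, hyperbolicDeriv g z ≤ hyperbolicDeriv f z) :
    ∃ τ z₀ : ℂ, ‖τ‖ = 1 ∧ ‖z₀‖ < 1 ∧ ∀ z ∈ U, g z = τ * diskInvolution z₀ (f z) := by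
  replace hf1 := norm_lt_one_of_not_eqOn_deriv_zero hU hUc hf hf1 fun h => hf' (h hp)
  have hg' : deriv g p ≠ 0 := fun h => hf' <| by
    rw [← hyperbolicDeriv_eq_zero_iff (hf1 p hp), ← heq, hyperbolicDeriv, h, norm_zero, zero_div]
  replace hg1 := norm_lt_one_of_not_eqOn_deriv_zero hU hUc hg hg1 fun h => hg' (h hp)
  have hf_hyp (z) (hz : z ∈ U) :
      hyperbolicDeriv (diskInvolution (f p) ∘ f) z = hyperbolicDeriv f z :=
    hyperbolicDeriv_diskInvolution_comp (hf1 p hp) (hf.differentiableAt (hU.mem_nhds hz))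
      (hf1 z hz).le
  have hg_hyp (z) (hz : z ∈ U) :
      hyperbolicDeriv (diskInvolution (g p) ∘ g) z = hyperbolicDeriv g z :=
    hyperbolicDeriv_diskInvolution_comp (hg1 p hp) (hg.differentiableAt (hU.mem_nhds hz))
      (hg1 z hz).le
  have hf_an : AnalyticOnNhd ℂ (diskInvolution (f p) ∘ f) U :=
    (differentiableOn_diskInvolution_comp hf (hf1 p hp)
      fun z hz => (hf1 z hz).le).analyticOnNhd hU
  have hg_an : AnalyticOnNhd ℂ (diskInvolution (g p) ∘ g) U :=
    (differentiableOn_diskInvolution_comp hg (hg1 p hp)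
      fun z hz => (hg1 z hz).le).analyticOnNhd hU
  have hderiv : deriv (diskInvolution (f p) ∘ f) p ≠ 0 := by
    have hnorm : ‖(diskInvolution (f p) ∘ f) p‖ < 1 :=
      norm_diskInvolution_lt_one (hf1 p hp) (hf1 p hp)
    rwa [Ne, ← hyperbolicDeriv_eq_zero_iff hnorm, hf_hyp p hp,
      hyperbolicDeriv_eq_zero_iff (hf1 p hp)]
  obtain ⟨c, hc, hlocal⟩ := exists_eventually_eq_const_mul_of_hyperbolicDeriv_le (hf_an p hp)
    (hg_an p hp) (diskInvolution_self _) (diskInvolution_self _) hderiv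
    (by rw [hf_hyp p hp, hg_hyp p hp, heq]) (by
      filter_upwards [hle, hU.mem_nhds hp] with z hz hzU
      rwa [hf_hyp z hzU, hg_hyp z hzU])
  have hglobal :
      Set.EqOn (diskInvolution (g p) ∘ g) (fun z => c * (diskInvolution (f p) ∘ f) z) U :=
    hg_an.eqOn_of_preconnected_of_eventuallyEq (analyticOnNhd_const.mul hf_an) hUc hp hlocal
  obtain ⟨τ, z₀, hτ, hz₀, hfg⟩ :=
    exists_automorphism_of_diskInvolution_eq_mul (hf1 p hp) (hg1 p hp) hc
  exact ⟨τ, z₀, hτ, hz₀, fun z hz => hfg _ _ (hf1 z hz).le (hg1 z hz).le (hglobal hz)⟩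

end HolomorphicRigidity

section BlaschkeProduct

theorem norm_tprod_le_one {ι K : Type*} [NormedField K] {f : ι → K} (hf : ∀ i, ‖f i‖ ≤ 1) :
    ‖∏' i, f i‖ ≤ 1 := by
  by_cases hmul : Multipliable f
  · exact le_of_tendsto hmul.hasProd.norm (Eventually.of_forall fun s =>
      Finset.prod_le_one (fun _ _ => norm_nonneg _) fun i _ => hf i)
  · rw [tprod_eq_one_of_not_multipliable hmul, norm_one]

theorem norm_ofReal_norm_div_self {a : ℂ} (ha : a ≠ 0) : ‖((‖a‖ : ℝ) : ℂ) / a‖ = 1 := by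
  rw [norm_div, Complex.norm_real, norm_norm, div_self (norm_ne_zero_iff.2 ha)]

theorem one_sub_norm_le_norm_one_sub_conj_mul {a : ℂ} (ha : ‖a‖ ≤ 1) (z : ℂ) :
    1 - ‖z‖ ≤ ‖1 - conj a * z‖ := calc
  1 - ‖z‖ ≤ ‖(1 : ℂ)‖ - ‖conj a * z‖ := by
    rw [norm_one, norm_mul, RCLike.norm_conj]
    exact sub_le_sub_left (mul_le_of_le_one_left (norm_nonneg z) ha) 1
  _ ≤ ‖1 - conj a * z‖ := norm_sub_norm_le _ _

theorem norm_blaschkeFactor_sub_one_le {a z : ℂ} (ha0 : a ≠ 0) (ha : ‖a‖ < 1) (hz : ‖z‖ < 1) :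
    ‖((‖a‖ : ℝ) : ℂ) / a * diskInvolution a z - 1‖ ≤ (1 - ‖a‖) * (2 / (1 - ‖z‖)) := by
  have hden : 1 - conj a * z ≠ 0 := one_sub_conj_mul_ne_zero ha hz.le
  have hfactor : ((‖a‖ : ℝ) : ℂ) / a * diskInvolution a z - 1 =
      -((1 - ‖a‖ : ℝ) : ℂ) * (1 + ((‖a‖ : ℝ) : ℂ) / a * z) / (1 - conj a * z) := by
    rw [diskInvolution, eq_div_iff hden, sub_mul, mul_assoc, div_mul_cancel₀ _ hden]
    field_simp
    push_cast
    linear_combination z * Complex.mul_conj' a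
  have hnum : ‖1 + ((‖a‖ : ℝ) : ℂ) / a * z‖ ≤ 2 := calc
    _ ≤ ‖(1 : ℂ)‖ + ‖((‖a‖ : ℝ) : ℂ) / a * z‖ := norm_add_le _ _
    _ ≤ 2 := by
      rw [norm_mul, norm_ofReal_norm_div_self ha0, norm_one]
      linarith
  have ha' : 0 ≤ 1 - ‖a‖ := sub_nonneg.2 ha.le
  have : 0 < 1 - ‖z‖ := sub_pos.2 hz
  rw [hfactor, norm_div, norm_mul, norm_neg, Complex.norm_of_nonneg ha', mul_div_assoc]
  gcongr
  exact one_sub_norm_le_norm_one_sub_conj_mul ha.le z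

theorem tprod_blaschkeFactor_ne_zero {ι : Type*} {a : ι → ℂ} {z : ℂ}
    (ha : ∀ j, a j ≠ 0 ∧ ‖a j‖ < 1) (hs : Summable fun j => 1 - ‖a j‖) (hz : ‖z‖ < 1)
    (hza : ∀ j, a j ≠ z) : ∏' j, ((‖a j‖ : ℝ) : ℂ) / a j * diskInvolution (a j) z ≠ 0 := by
  have hfactor_ne (j) : ((‖a j‖ : ℝ) : ℂ) / a j * diskInvolution (a j) z ≠ 0 :=
    mul_ne_zero (norm_ne_zero_iff.1 (norm_ofReal_norm_div_self (ha j).1 ▸ one_ne_zero))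
      (div_ne_zero (sub_ne_zero.2 (hza j)) (one_sub_conj_mul_ne_zero (ha j).2 hz.le))
  have hsum : Summable fun j => ‖((‖a j‖ : ℝ) : ℂ) / a j * diskInvolution (a j) z - 1‖ :=
    .of_nonneg_of_le (fun _ => norm_nonneg _)
      (fun j => norm_blaschkeFactor_sub_one_le (ha j).1 (ha j).2 hz) (hs.mul_right _)
  simpa only [add_sub_cancel] using tprod_one_add_ne_zero_of_summable
    (fun j => by simpa only [add_sub_cancel] using hfactor_ne j) hsum

namespace IsBlaschkeProduct

variable {B B₁ B₂ : ℂ → ℂ}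

theorem differentiableOn (hB : IsBlaschkeProduct B) : DifferentiableOn ℂ B (ball 0 1) :=
  fun z hz => (hB.1 z hz).differentiableWithinAt

theorem norm_le_one (hB : IsBlaschkeProduct B) : ∀ z ∈ ball (0 : ℂ) 1, ‖B z‖ ≤ 1 := by
  obtain ⟨-, η, m, ι, a, hη, ha, -, hB⟩ := hB
  intro z hz
  have hz1 : ‖z‖ ≤ 1 := (mem_ball_zero_iff.1 hz).le
  rw [hB z hz, norm_mul, norm_mul, hη, one_mul, norm_pow]
  refine mul_le_one₀ (pow_le_one₀ (norm_nonneg z) hz1) (norm_nonneg _)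
    (norm_tprod_le_one fun j => ?_)
  rw [norm_mul, norm_ofReal_norm_div_self (ha j).1, one_mul]
  exact norm_diskInvolution_le_one (ha j).2 hz1

theorem exists_ne_zero (hB : IsBlaschkeProduct B) : ∃ z ∈ ball (0 : ℂ) 1, B z ≠ 0 := by
  obtain ⟨-, η, m, ι, a, hη, ha, hs, hB⟩ := hB
  have hsupport : Function.support (fun j => 1 - ‖a j‖) = Set.univ :=
    Function.support_eq_univ fun j => (sub_pos.2 (ha j).2).ne'
  have hι : Countable ι := Set.countable_univ_iff.1 (hsupport ▸ hs.countable_support)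
  obtain ⟨w, hw, hwa⟩ := (((Set.countable_range a).insert 0).dense_compl ℂ).inter_open_nonempty
    (ball 0 1) isOpen_ball ⟨0, mem_ball_self one_pos⟩
  have hw0 : w ≠ 0 := fun h => hwa (.inl h)
  refine ⟨w, hw, hB w hw ▸ mul_ne_zero (mul_ne_zero ?_ (pow_ne_zero m hw0)) ?_⟩
  · exact norm_ne_zero_iff.1 (hη ▸ one_ne_zero)
  · exact tprod_blaschkeFactor_ne_zero ha hs (mem_ball_zero_iff.1 hw) fun j h => hwa (.inr ⟨j, h⟩)

theorem norm_eq_one_of_forall_ne_zero (hB : IsBlaschkeProduct B)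
    (hne : ∀ z ∈ ball (0 : ℂ) 1, B z ≠ 0) : ∀ z ∈ ball (0 : ℂ) 1, ‖B z‖ = 1 := by
  obtain ⟨-, η, m, ι, a, hη, ha, -, hB⟩ := hB
  have h0 : (0 : ℂ) ∈ ball (0 : ℂ) 1 := mem_ball_self one_pos
  have hm : m = 0 := by
    by_contra hm
    exact hne 0 h0 (by rw [hB 0 h0, zero_pow hm, mul_zero, zero_mul])
  have hι : IsEmpty ι := ⟨fun j => by
    have haj : a j ∈ ball (0 : ℂ) 1 := mem_ball_zero_iff.2 (ha j).2
    exact hne _ haj (by rw [hB _ haj, tprod_of_exists_eq_zero ⟨j, by simp⟩, mul_zero])⟩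
  intro z hz
  rw [hB z hz, hm, tprod_empty, pow_zero, mul_one, mul_one, hη]

theorem exists_norm_eq_one_eqOn_const (hB : IsBlaschkeProduct B)
    (hderiv : Set.EqOn (deriv B) 0 (ball 0 1)) :
    ∃ c : ℂ, ‖c‖ = 1 ∧ ∀ z ∈ ball (0 : ℂ) 1, B z = c := by
  have hconst {z w} (hz : z ∈ ball (0 : ℂ) 1) (hw : w ∈ ball (0 : ℂ) 1) : B z = B w :=
    isOpen_ball.is_const_of_deriv_eq_zero (convex_ball (0 : ℂ) 1).isPreconnected
      hB.differentiableOn hderiv hz hw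
  obtain ⟨w, hw, hBw⟩ := hB.exists_ne_zero
  exact ⟨B w, hB.norm_eq_one_of_forall_ne_zero (fun z hz => hconst hz hw ▸ hBw) w hw,
    fun z hz => hconst hz hw⟩

theorem exists_automorphism_of_deriv_eqOn_zero (hB₁ : IsBlaschkeProduct B₁)
    (hB₂ : IsBlaschkeProduct B₂) (h₁ : Set.EqOn (deriv B₁) 0 (ball 0 1))
    (h₂ : Set.EqOn (deriv B₂) 0 (ball 0 1)) :
    ∃ τ z₀ : ℂ, ‖τ‖ = 1 ∧ ‖z₀‖ < 1 ∧
      ∀ z ∈ ball (0 : ℂ) 1, B₂ z = τ * diskInvolution z₀ (B₁ z) := by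
  obtain ⟨c₁, hc₁, hB₁c⟩ := hB₁.exists_norm_eq_one_eqOn_const h₁
  obtain ⟨c₂, hc₂, hB₂c⟩ := hB₂.exists_norm_eq_one_eqOn_const h₂
  have hc₁0 : c₁ ≠ 0 := norm_ne_zero_iff.1 (hc₁ ▸ one_ne_zero)
  refine ⟨-(c₂ / c₁), 0, ?_, norm_zero.trans_lt one_pos, fun z hz => ?_⟩
  · rw [norm_neg, norm_div, hc₁, hc₂, div_one]
  · rw [hB₁c z hz, hB₂c z hz]
    simp [diskInvolution, hc₁0]

end IsBlaschkeProduct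

end BlaschkeProduct

section VanishingOrder

variable {f g : ℂ → ℂ} {U : Set ℂ} {z : ℂ}

theorem vOrder_eq_top_iff : vOrder f z = ⊤ ↔ ∀ n, iteratedDeriv n f z = 0 := by
  simp [vOrder, sInf_eq_top]

theorem eqOn_zero_of_vOrder_le (hU : IsOpen U) (hle : ∀ z ∈ U, vOrder f z ≤ vOrder g z)
    (hf : Set.EqOn f 0 U) : Set.EqOn g 0 U := fun z hz => by
  have hfz : f =ᶠ[𝓝 z] fun _ => 0 := hf.eventuallyEq_of_mem (hU.mem_nhds hz)
  have hf_top : vOrder f z = ⊤ := vOrder_eq_top_iff.2 fun n => by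
    rw [hfz.iteratedDeriv_eq n]
    simp
  simpa using vOrder_eq_top_iff.1 (top_le_iff.1 (hf_top ▸ hle z hz)) 0

end VanishingOrder

theorem IsMaximalBlaschke.hyperbolicDeriv_le {B f : ℂ → ℂ} (hB : IsMaximalBlaschke B)
    (hf : DifferentiableOn ℂ f (ball 0 1)) (hf1 : ∀ z ∈ ball (0 : ℂ) 1, ‖f z‖ ≤ 1)
    (hf' : ¬Set.EqOn (deriv f) 0 (ball 0 1))
    (hcrit : ∀ z ∈ ball (0 : ℂ) 1, vOrder (deriv B) z ≤ vOrder (deriv f) z) :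
    ∀ z ∈ ball (0 : ℂ) 1, hyperbolicDeriv f z ≤ hyperbolicDeriv B z := fun z hz => by
  have hpos {h : ℂ → ℂ} (hh : DifferentiableOn ℂ h (ball 0 1))
      (h1 : ∀ z ∈ ball (0 : ℂ) 1, ‖h z‖ ≤ 1) (h' : ¬Set.EqOn (deriv h) 0 (ball 0 1)) :
      0 < 1 - ‖h z‖ ^ 2 :=
    sub_pos.2 (pow_lt_one₀ (norm_nonneg _) (norm_lt_one_of_not_eqOn_deriv_zero isOpen_ball
      (convex_ball (0 : ℂ) 1).isPreconnected hh h1 h' z hz) two_ne_zero)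
  have hB' : ¬Set.EqOn (deriv B) 0 (ball 0 1) := mt (eqOn_zero_of_vOrder_le isOpen_ball hcrit) hf'
  have hf_nonconst : ∃ z ∈ ball (0 : ℂ) 1, ∃ w ∈ ball (0 : ℂ) 1, f z ≠ f w := by
    by_contra! hconst
    exact hf' (eqOn_deriv_zero_of_eqOn_const isOpen_ball fun w hw => hconst w hw z hz)
  exact (div_le_div_iff₀ (hpos hf hf1 hf') (hpos hB.1.differentiableOn hB.1.norm_le_one hB')).2 <|
    hB.2 f (fun w hw => hf.differentiableAt (isOpen_ball.mem_nhds hw)) hf1 hf_nonconst hcrit z hz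

/-- **Uniqueness of maximal Blaschke products.** If `B₁` and `B₂` are maximal Blaschke
products whose derivatives have exactly the same zeros in the open unit disk, with
the same multiplicities, then `B₂ = T ∘ B₁` on the disk for some conformal
automorphism `T` of the disk. -/
theorem maximal_blaschke_uniqueness (B₁ B₂ : ℂ → ℂ)
    (hB₁ : IsMaximalBlaschke B₁) (hB₂ : IsMaximalBlaschke B₂)
    (hcrit : ∀ z ∈ Metric.ball (0 : ℂ) 1, vOrder (deriv B₁) z = vOrder (deriv B₂) z) :
    ∃ (τ : ℂ) (z₀ : ℂ), ‖τ‖ = 1 ∧ ‖z₀‖ < 1 ∧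
      ∀ z ∈ Metric.ball (0 : ℂ) 1,
        B₂ z = τ * (z₀ - B₁ z) / (1 - (starRingEnd ℂ) z₀ * B₁ z) := by
  suffices h : ∃ τ z₀ : ℂ, ‖τ‖ = 1 ∧ ‖z₀‖ < 1 ∧
      ∀ z ∈ ball (0 : ℂ) 1, B₂ z = τ * diskInvolution z₀ (B₁ z) by
    simpa only [diskInvolution, mul_div_assoc] using h
  have hle₁₂ z hz := (hcrit z hz).le
  have hle₂₁ z hz := (hcrit z hz).ge
  by_cases h₁ : Set.EqOn (deriv B₁) 0 (ball 0 1)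
  · exact hB₁.1.exists_automorphism_of_deriv_eqOn_zero hB₂.1 h₁
      (eqOn_zero_of_vOrder_le isOpen_ball hle₁₂ h₁)
  have h₂ := mt (eqOn_zero_of_vOrder_le isOpen_ball hle₂₁) h₁
  have hyp₁₂ := hB₂.hyperbolicDeriv_le hB₁.1.differentiableOn hB₁.1.norm_le_one h₁ hle₂₁
  have hyp₂₁ := hB₁.hyperbolicDeriv_le hB₂.1.differentiableOn hB₂.1.norm_le_one h₂ hle₁₂
  obtain ⟨p, hp, hderiv⟩ : ∃ p ∈ ball (0 : ℂ) 1, deriv B₁ p ≠ 0 := by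
    simpa [Set.EqOn] using h₁
  exact exists_eqOn_automorphism_of_hyperbolicDeriv_le isOpen_ball
    (convex_ball (0 : ℂ) 1).isPreconnected hB₁.1.differentiableOn hB₂.1.differentiableOn
    hB₁.1.norm_le_one hB₂.1.norm_le_one hp hderiv ((hyp₂₁ p hp).antisymm (hyp₁₂ p hp))
    (eventually_of_mem (isOpen_ball.mem_nhds hp) hyp₂₁)
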